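/- arXiv:1609.03122 — 3 statements merged into one kernel-verified Lean document; each statement's English description precedes it below -/
import Mathlib

section
/- Let Γ₂ = ⟨u, v⟩_ℤ be the sublattice of the Gaussian integers ℤ[i] generated over ℤ by two ℝ-linearly independent Gaussian integers u and v. Then Γ₂ is invariant under the map z ↦ i·conj(z) (i.e., i·conj(Γ₂) = Γ₂) if and only if Im(u·conj(v)) divides each of Re(u²), Re(v²), and Re(uv). -/
open Complex

/-!
The form `Im (x * conj y)` is, up to sign, the area form of the plane. Cramer's rule for it reads
`Im (u * conj v) * w = Im (w * conj v) * u + Im (u * conj w) * v`, so `w` lies in the lattice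
`⟨u, v⟩_ℤ` exactly when `Im (w * conj v)` and `Im (u * conj w)` are integer multiples of
`Im (u * conj v)`. A reflection is an involution, so it preserves the lattice as soon as it maps
`u` and `v` into it. For `w = e * conj u` and `w = e * conj v`, the four numerators are, up to sign,
`Im (conj e * u ^ 2)`, `Im (conj e * v ^ 2)` and, twice, `Im (conj e * (u * v))`.
-/

section Lattice

open ComplexConjugate Submodule AddSubgroup

theorem image_eq_self_iff_mapsTo_of_involutive {α : Type*} {f : α → α}
    (hf : Function.Involutive f) {s : Set α} : f '' s = s ↔ Set.MapsTo f s s :=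
  ⟨fun h => Set.mapsTo_iff_image_subset.mpr h.le,
    fun h => h.image_subset.antisymm fun x hx => ⟨f x, h hx, hf x⟩⟩

theorem intCast_mem_zmultiples_intCast_iff_dvd {R : Type*} [Ring R] [CharZero R] {m n : ℤ} :
    (n : R) ∈ zmultiples (m : R) ↔ m ∣ n := by
  simp only [mem_zmultiples_iff, zsmul_eq_mul, dvd_def, mul_comm m, eq_comm (a := n)]
  norm_cast

theorem mapsTo_span_pair_iff {R M N : Type*} [Semiring R] [AddCommMonoid M] [AddCommMonoid N]
    [Module R M] [Module R N] (f : M →ₗ[R] N) (u v : M) (p : Submodule R N) :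
    Set.MapsTo f (span R {u, v}) p ↔ f u ∈ p ∧ f v ∈ p :=
  (span_le (p := p.comap f)).trans Set.pair_subset_iff

theorem mul_conj_involutive {e : ℂ} (he : ‖e‖ = 1) :
    Function.Involutive fun z => e * conj z := fun z => by
  simp [← mul_assoc, mul_conj', he]

theorem coe_span_int_pair {R : Type*} [Ring R] (u v : R) :
    (span ℤ {u, v} : Set R) = {z | ∃ a b : ℤ, z = a * u + b * v} := by
  ext z
  simp [mem_span_pair, eq_comm]

theorem im_mul_conj_cramer (u v w : ℂ) :
    ((u * conj v).im : ℂ) * w = (w * conj v).im * u + (u * conj w).im * v := by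
  apply Complex.ext <;>
    simp only [mul_re, mul_im, add_re, add_im, conj_re, conj_im, ofReal_re, ofReal_im] <;>
    ring

theorem im_mul_conj_ne_zero {u v : ℂ} (h : LinearIndependent ℝ ![u, v]) :
    (u * conj v).im ≠ 0 := by
  intro h0
  have hcramer : (I * v * conj v).im • u + (u * conj (I * v)).im • v = 0 := by
    simpa [h0] using (im_mul_conj_cramer u v (I * v)).symm
  have hv : (I * v * conj v).im = 0 := (LinearIndependent.pair_iff.mp h _ _ hcramer).1
  rw [mul_assoc, mul_conj, I_mul_im, ofReal_re, normSq_eq_zero] at hv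
  exact h.ne_zero 1 hv

theorem mem_span_int_pair_iff {u v w : ℂ} (h : LinearIndependent ℝ ![u, v]) :
    w ∈ span ℤ {u, v} ↔
      (w * conj v).im ∈ zmultiples (u * conj v).im ∧
        (u * conj w).im ∈ zmultiples (u * conj v).im := by
  simp only [mem_span_pair, mem_zmultiples_iff, zsmul_eq_mul]
  constructor
  · rintro ⟨a, b, rfl⟩
    refine ⟨⟨a, ?_⟩, b, ?_⟩ <;>
      simp only [mul_re, mul_im, add_re, add_im, conj_re, conj_im, intCast_re, intCast_im] <;>
      ring
  · rintro ⟨⟨a, ha⟩, b, hb⟩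
    refine ⟨a, b, mul_left_cancel₀ (ofReal_ne_zero.mpr (im_mul_conj_ne_zero h)) ?_⟩
    rw [im_mul_conj_cramer u v w, ← ha, ← hb]
    push_cast
    ring

theorem mapsTo_mul_conj_span_int_pair_iff {u v : ℂ} (e : ℂ)
    (h : LinearIndependent ℝ ![u, v]) :
    Set.MapsTo (fun z => e * conj z) (span ℤ {u, v}) (span ℤ {u, v}) ↔
      (conj e * u ^ 2).im ∈ zmultiples (u * conj v).im ∧
        (conj e * v ^ 2).im ∈ zmultiples (u * conj v).im ∧
          (conj e * (u * v)).im ∈ zmultiples (u * conj v).im := by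
  have huu : (u * conj (e * conj u)).im = (conj e * u ^ 2).im := by
    rw [map_mul, conj_conj]
    ring_nf
  have huv : (u * conj (e * conj v)).im = (conj e * (u * v)).im := by
    rw [map_mul, conj_conj]
    ring_nf
  have hvu : (e * conj u * conj v).im = -(conj e * (u * v)).im := by
    rw [← conj_im]
    simp [mul_assoc]
  have hvv : (e * conj v * conj v).im = -(conj e * v ^ 2).im := by
    rw [← conj_im]
    simp [mul_assoc, sq]
  have hspan : Set.MapsTo (fun z => e * conj z) (span ℤ {u, v}) (span ℤ {u, v}) ↔
      e * conj u ∈ span ℤ {u, v} ∧ e * conj v ∈ span ℤ {u, v} :=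
    mapsTo_span_pair_iff
      (LinearMap.mulLeft ℤ e ∘ₗ (conj : ℂ →+* ℂ).toAddMonoidHom.toIntLinearMap) u v _
  rw [hspan, mem_span_int_pair_iff h, mem_span_int_pair_iff h, huu, huv, hvu, hvv, neg_mem_iff,
    neg_mem_iff]
  tauto

theorem mul_I_conj_invariant_iff_general {e u v : ℂ} (he : ‖e‖ = 1)
    (h : LinearIndependent ℝ ![u, v]) :
    (fun z => e * conj z) '' (span ℤ {u, v} : Set ℂ) = span ℤ {u, v} ↔
      (conj e * u ^ 2).im ∈ zmultiples (u * conj v).im ∧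
        (conj e * v ^ 2).im ∈ zmultiples (u * conj v).im ∧
          (conj e * (u * v)).im ∈ zmultiples (u * conj v).im :=
  (image_eq_self_iff_mapsTo_of_involutive (mul_conj_involutive he)).trans
    (mapsTo_mul_conj_span_int_pair_iff e h)

end Lattice

/-- Let `Γ₂ = ⟨u, v⟩_ℤ` be the sublattice of the Gaussian integers `ℤ[i] ⊆ ℂ` generated
by two `ℝ`-linearly independent Gaussian integers `u` and `v`.  Then `Γ₂` is invariant
under the diagonal reflection `z ↦ i·conj z` if and only if `Im(u·conj v)` divides each
of `Re(u²)`, `Re(v²)` and `Re(uv)`. -/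
theorem mul_I_conj_invariant_iff (u v : ℂ) (u₁ u₂ v₁ v₂ : ℤ)
    (hu : u = u₁ + u₂ * I) (hv : v = v₁ + v₂ * I)
    (hind : LinearIndependent ℝ ![u, v])
    (Γ₂ : Set ℂ) (hΓ₂ : Γ₂ = {z | ∃ a b : ℤ, z = a * u + b * v})
    (ruv iuv ru2 iu2 rv2 iv2 rmuv imuv : ℤ)
    (hruv : u * starRingEnd ℂ v = ruv + iuv * I)
    (hu2 : u ^ 2 = ru2 + iu2 * I)
    (hv2 : v ^ 2 = rv2 + iv2 * I)
    (hmuv : u * v = rmuv + imuv * I) :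
    (fun z => I * starRingEnd ℂ z) '' Γ₂ = Γ₂ ↔
      (iuv ∣ ru2 ∧ iuv ∣ rv2 ∧ iuv ∣ rmuv) := by
  rw [hΓ₂, ← coe_span_int_pair, mul_I_conj_invariant_iff_general norm_I hind, hu2, hv2, hmuv, hruv]
  simp [intCast_mem_zmultiples_intCast_iff_dvd]
end

section
/- Let Γ₁ = ℤ[i] and Γ₂ = ⟨u, v⟩_ℤ for ℝ-linearly independent u, v ∈ ℤ[i]. Suppose none of the following holds: (i) Im(u·conj(v)) divides all of N(u), N(v), Re(u·conj(v)); (ii) Im(u·conj(v)) divides all of Im(u²), Im(v²), Im(uv); (iii) Im(u·conj(v)) divides all of Re(u²), Re(v²), Re(uv). Then the point group of the color group H of the coloring of Γ₁ determined by Γ₂ is {identity, z ↦ −z} of order 2 (so the color group is of type p2). -/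
open Complex

/-- A symmetry `h` of the plane (identified with `ℂ`) is a *color symmetry* of the
coloring of `Γ₁` determined by its subgroup `Γ₂` (each coset of `Γ₂` is one color) if
there is a permutation `σ` of the colors with `c (h ℓ) = σ (c ℓ)` for all `ℓ ∈ Γ₁`. -/
def IsColorSymmetry (Γ₁ Γ₂ : AddSubgroup ℂ) (h : ℂ → ℂ) : Prop :=
  ∃ σ : Equiv.Perm (ℂ ⧸ Γ₂), ∀ ℓ ∈ Γ₁,
    (QuotientAddGroup.mk (h ℓ) : ℂ ⧸ Γ₂) = σ (QuotientAddGroup.mk ℓ)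

/-- The point group `P(H)` of the color group `H` of the coloring of `Γ₁` determined by
`Γ₂`: all isometries of the plane fixing the origin, mapping `Γ₁` onto itself, and
permuting the colors. -/
def pointColorGroup (Γ₁ Γ₂ : AddSubgroup ℂ) : Set (ℂ → ℂ) :=
  {g | Isometry g ∧ Function.Surjective g ∧ g 0 = 0 ∧
    g '' (Γ₁ : Set ℂ) = Γ₁ ∧ IsColorSymmetry Γ₁ Γ₂ g}

/-!
A symmetry fixing the origin and preserving `ℤ[i]` is `z ↦ e z` or `z ↦ e conj(z)` with
`e ∈ {±1, ±i}`, and if it permutes the colors then it maps `Γ₂` into itself. Since `Γ₂ = -Γ₂`, it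
remains to exclude `z ↦ i z`, `z ↦ conj(z)` and `z ↦ i conj(z)`. The form `Im (z conj(w))` is
alternating, so on `Γ₂` it takes only multiples of `Im (u conj(v))`. When `f` maps `Γ₂` into itself,
evaluating the form at `(f u, u)`, `(f v, v)` and `(f u, v)` therefore gives the divisibilities (i),
(ii), (iii) for the three maps.
-/

open GaussianInt Zsqrtd
open scoped ComplexConjugate

section Divisibility

variable {d : ℤ} {u v w : ℤ√d}

theorem im_mul_star_dvd_of_mem_closure_pair (hw : w ∈ AddSubgroup.closure {u, v}) :
    (u * star v).im ∣ (w * star u).im ∧ (u * star v).im ∣ (w * star v).im := by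
  obtain ⟨p, q, rfl⟩ := AddSubgroup.mem_closure_pair.1 hw
  refine ⟨⟨-q, ?_⟩, ⟨p, ?_⟩⟩ <;> simp <;> ring

theorem im_mul_star_dvd_of_sqrtd_mul_mem (hu : sqrtd * u ∈ AddSubgroup.closure {u, v})
    (hv : sqrtd * v ∈ AddSubgroup.closure {u, v}) :
    (u * star v).im ∣ u.norm ∧ (u * star v).im ∣ v.norm ∧ (u * star v).im ∣ (u * star v).re := by
  obtain ⟨huu, huv⟩ := im_mul_star_dvd_of_mem_closure_pair hu
  obtain ⟨-, hvv⟩ := im_mul_star_dvd_of_mem_closure_pair hv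
  have im_sqrtd_mul (z : ℤ√d) : (sqrtd * z).im = z.re := by simp
  have re_mul_star (z : ℤ√d) : (z * star z).re = z.norm := by
    rw [← norm_eq_mul_conj, re_intCast]
  simp only [mul_assoc, im_sqrtd_mul, re_mul_star] at huu huv hvv
  exact ⟨huu, hvv, huv⟩

theorem im_mul_star_dvd_of_star_mem (hu : star u ∈ AddSubgroup.closure {u, v})
    (hv : star v ∈ AddSubgroup.closure {u, v}) :
    (u * star v).im ∣ (u ^ 2).im ∧ (u * star v).im ∣ (v ^ 2).im ∧
      (u * star v).im ∣ (u * v).im := by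
  obtain ⟨huu, huv⟩ := im_mul_star_dvd_of_mem_closure_pair hu
  obtain ⟨-, hvv⟩ := im_mul_star_dvd_of_mem_closure_pair hv
  simp only [← star_mul', im_star, dvd_neg, ← sq, ← star_pow] at huu huv hvv
  exact ⟨huu, hvv, huv⟩

theorem im_mul_star_dvd_of_sqrtd_mul_star_mem (hu : sqrtd * star u ∈ AddSubgroup.closure {u, v})
    (hv : sqrtd * star v ∈ AddSubgroup.closure {u, v}) :
    (u * star v).im ∣ (u ^ 2).re ∧ (u * star v).im ∣ (v ^ 2).re ∧
      (u * star v).im ∣ (u * v).re := by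
  obtain ⟨huu, huv⟩ := im_mul_star_dvd_of_mem_closure_pair hu
  obtain ⟨-, hvv⟩ := im_mul_star_dvd_of_mem_closure_pair hv
  have im_sqrtd_mul_star (z : ℤ√d) : (sqrtd * star z).im = z.re := by simp
  simp only [mul_assoc, ← star_mul', im_sqrtd_mul_star, ← sq, ← star_pow] at huu huv hvv
  exact ⟨huu, hvv, huv⟩

end Divisibility

section ColorSymmetry

variable {Γ₁ Γ₂ : AddSubgroup ℂ}

theorem IsColorSymmetry.map_mem {h : ℂ → ℂ} (hh : IsColorSymmetry Γ₁ Γ₂ h) (h0 : h 0 = 0) {z : ℂ}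
    (hz₁ : z ∈ Γ₁) (hz₂ : z ∈ Γ₂) : h z ∈ Γ₂ := by
  obtain ⟨σ, hσ⟩ := hh
  rw [← QuotientAddGroup.eq_zero_iff, hσ z hz₁, (QuotientAddGroup.eq_zero_iff z).2 hz₂,
    ← QuotientAddGroup.mk_zero, ← hσ 0 Γ₁.zero_mem, h0]

theorem id_mem_pointColorGroup : (fun z ↦ z) ∈ pointColorGroup Γ₁ Γ₂ :=
  ⟨isometry_id, Function.surjective_id, rfl, Set.image_id' _, Equiv.refl _, fun _ _ ↦ rfl⟩

theorem neg_mem_pointColorGroup : (fun z ↦ -z) ∈ pointColorGroup Γ₁ Γ₂ :=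
  ⟨(IsometryEquiv.neg ℂ).isometry, neg_surjective, neg_zero, by simp, Equiv.neg _, fun _ _ ↦ rfl⟩

end ColorSymmetry

theorem exists_circle_eq_of_isometry {g : ℂ → ℂ} (hg : Isometry g) (h0 : g 0 = 0) :
    ∃ a : Circle, (∀ z, g z = a * z) ∨ ∀ z, g z = a * conj z := by
  let f : ℂ →ₗᵢ[ℝ] ℂ := hg.affineIsometryOfStrictConvexSpace.linearIsometry
  have hf (z : ℂ) : g z = f z := by
    simpa [h0] using (hg.affineIsometryOfStrictConvexSpace.map_vsub z 0).symm
  obtain ⟨a, ha⟩ := linear_isometry_complex (f.toLinearIsometryEquiv rfl)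
  refine ⟨a, ha.imp (fun ha z ↦ ?_) (fun ha z ↦ ?_)⟩ <;>
    simpa [hf] using DFunLike.congr_fun ha z

theorem eq_one_or_neg_one_or_sqrtd_or_neg_sqrtd_of_norm_eq_one {e : GaussianInt} (he : e.norm = 1) :
    e = 1 ∨ e = -1 ∨ e = sqrtd ∨ e = -sqrtd := by
  obtain ⟨m, n⟩ := e
  have hmn : m * m + n * n = 1 := by simpa [Zsqrtd.norm_def] using he
  obtain ⟨_, _⟩ : -1 ≤ m ∧ m ≤ 1 := by constructor <;> nlinarith
  obtain ⟨_, _⟩ : -1 ≤ n ∧ n ≤ 1 := by constructor <;> nlinarith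
  interval_cases m <;> interval_cases n <;> simp_all [Zsqrtd.ext_iff]

/-- The square lattice `ℤ[i]` as a subgroup of the plane. -/
def gaussianLattice : AddSubgroup ℂ :=
  (toComplex : GaussianInt →+ ℂ).range

theorem mem_gaussianLattice {z : ℂ} : z ∈ gaussianLattice ↔ ∃ x : GaussianInt, toComplex x = z :=
  Iff.rfl

theorem closure_one_I_eq_gaussianLattice : AddSubgroup.closure {1, I} = gaussianLattice := by
  ext z
  simp only [AddSubgroup.mem_closure_pair, mem_gaussianLattice]
  exact ⟨fun ⟨p, q, h⟩ ↦ ⟨⟨p, q⟩, by simp [toComplex_def', ← h]⟩,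
    fun ⟨x, h⟩ ↦ ⟨x.re, x.im, by simp [← h, toComplex_def]⟩⟩

theorem exists_gaussianInt_eq_of_isometry {g : ℂ → ℂ} (hg : Isometry g) (h0 : g 0 = 0)
    (h1 : g 1 ∈ gaussianLattice) :
    ∃ e : GaussianInt, e.norm = 1 ∧
      ((∀ z, g z = toComplex e * z) ∨ ∀ z, g z = toComplex e * conj z) := by
  obtain ⟨e, he⟩ := mem_gaussianLattice.1 h1
  obtain ⟨a, ha⟩ := exists_circle_eq_of_isometry hg h0
  have hea : toComplex e = a := by
    rcases ha with ha | ha <;> simp [he, ha]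
  have norm_e : e.norm = 1 := by
    rw [← Int.cast_inj (α := ℝ), intCast_real_norm, hea, Circle.normSq_coe, Int.cast_one]
  exact ⟨e, norm_e, by rwa [hea]⟩

theorem pointColorGroup_gaussianLattice_eq_of_not_forall_mem {L : AddSubgroup GaussianInt}
    (hrot : ¬ ∀ z ∈ L, sqrtd * z ∈ L) (hconj : ¬ ∀ z ∈ L, star z ∈ L)
    (hrotconj : ¬ ∀ z ∈ L, sqrtd * star z ∈ L) :
    pointColorGroup gaussianLattice (L.map (toComplex : GaussianInt →+ ℂ)) =
      {fun z ↦ z, fun z ↦ -z} := by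
  refine Set.Subset.antisymm ?_
    (Set.pair_subset id_mem_pointColorGroup neg_mem_pointColorGroup)
  rintro g ⟨hg, -, h0, hΓ₁, hcolor⟩
  have g_map {z w : GaussianInt} (hz : z ∈ L) (hzw : g (toComplex z) = toComplex w) : w ∈ L := by
    have hgz := hcolor.map_mem h0 (mem_gaussianLattice.2 ⟨z, rfl⟩)
      (AddSubgroup.mem_map_of_mem (toComplex : GaussianInt →+ ℂ) hz)
    rw [hzw] at hgz
    exact (AddSubgroup.mem_map_iff_mem toComplex_injective).1 hgz
  have h1 : g 1 ∈ gaussianLattice :=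
    hΓ₁.subset ⟨1, mem_gaussianLattice.2 ⟨1, map_one _⟩, rfl⟩
  obtain ⟨e, he, hge | hge⟩ := exists_gaussianInt_eq_of_isometry hg h0 h1
  · have e_mul_mem (z) (hz : z ∈ L) : e * z ∈ L := g_map hz (by rw [hge, map_mul])
    rcases eq_one_or_neg_one_or_sqrtd_or_neg_sqrtd_of_norm_eq_one he with rfl | rfl | rfl | rfl
    · exact .inl (funext fun z ↦ by simp [hge])
    · exact .inr (funext fun z ↦ by simp [hge])
    · exact absurd e_mul_mem hrot
    · exact absurd (by simpa using e_mul_mem) hrot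
  · have e_mul_star_mem (z) (hz : z ∈ L) : e * star z ∈ L :=
      g_map hz (by rw [hge, map_mul, toComplex_star])
    rcases eq_one_or_neg_one_or_sqrtd_or_neg_sqrtd_of_norm_eq_one he with rfl | rfl | rfl | rfl
    · exact absurd (by simpa using e_mul_star_mem) hconj
    · exact absurd (by simpa using e_mul_star_mem) hconj
    · exact absurd e_mul_star_mem hrotconj
    · exact absurd (by simpa using e_mul_star_mem) hrotconj

theorem pointColorGroup_p2_general (u v : GaussianInt)
    (h1 : ¬ ((u * star v).im ∣ u.norm ∧ (u * star v).im ∣ v.norm ∧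
      (u * star v).im ∣ (u * star v).re))
    (h2 : ¬ ((u * star v).im ∣ (u ^ 2).im ∧ (u * star v).im ∣ (v ^ 2).im ∧
      (u * star v).im ∣ (u * v).im))
    (h3 : ¬ ((u * star v).im ∣ (u ^ 2).re ∧ (u * star v).im ∣ (v ^ 2).re ∧
      (u * star v).im ∣ (u * v).re)) :
    pointColorGroup gaussianLattice (AddSubgroup.closure {toComplex u, toComplex v}) =
      {fun z ↦ z, fun z ↦ -z} := by
  have hu : u ∈ AddSubgroup.closure {u, v} := AddSubgroup.subset_closure (by simp)
  have hv : v ∈ AddSubgroup.closure {u, v} := AddSubgroup.subset_closure (by simp)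
  have map_closure : (AddSubgroup.closure {u, v}).map (toComplex : GaussianInt →+ ℂ) =
      AddSubgroup.closure {toComplex u, toComplex v} := by
    rw [AddMonoidHom.map_closure, Set.image_pair]
    rfl
  rw [← map_closure]
  exact pointColorGroup_gaussianLattice_eq_of_not_forall_mem
    (fun h ↦ h1 (im_mul_star_dvd_of_sqrtd_mul_mem (h u hu) (h v hv)))
    (fun h ↦ h2 (im_mul_star_dvd_of_star_mem (h u hu) (h v hv)))
    (fun h ↦ h3 (im_mul_star_dvd_of_sqrtd_mul_star_mem (h u hu) (h v hv)))

/-- Case (e) for the square lattice `Γ₁ = ℤ[i]`: if none of the divisibility criteria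
(a)–(d) holds, then the point group of the color group of the coloring of `Γ₁`
determined by `Γ₂ = ⟨u, v⟩_ℤ` is `{id, z ↦ -z}` of order `2` (type `p2`). -/
theorem pointColorGroup_p2 (u v : ℂ) (u₁ u₂ v₁ v₂ : ℤ)
    (hu : u = u₁ + u₂ * I) (hv : v = v₁ + v₂ * I)
    (hind : LinearIndependent ℝ ![u, v])
    (Γ₁ Γ₂ : AddSubgroup ℂ)
    (hΓ₁ : Γ₁ = AddSubgroup.closure ({1, I} : Set ℂ))
    (hΓ₂ : Γ₂ = AddSubgroup.closure ({u, v} : Set ℂ))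
    (ruv iuv nu nv ru2 iu2 rv2 iv2 rmuv imuv : ℤ)
    (hruv : u * starRingEnd ℂ v = ruv + iuv * I)
    (hnu : u * starRingEnd ℂ u = (nu : ℂ))
    (hnv : v * starRingEnd ℂ v = (nv : ℂ))
    (hu2 : u ^ 2 = ru2 + iu2 * I)
    (hv2 : v ^ 2 = rv2 + iv2 * I)
    (hmuv : u * v = rmuv + imuv * I)
    (h1 : ¬ (iuv ∣ nu ∧ iuv ∣ nv ∧ iuv ∣ ruv))
    (h2 : ¬ (iuv ∣ iu2 ∧ iuv ∣ iv2 ∧ iuv ∣ imuv))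
    (h3 : ¬ (iuv ∣ ru2 ∧ iuv ∣ rv2 ∧ iuv ∣ rmuv)) :
    pointColorGroup Γ₁ Γ₂ = {fun z => z, fun z => -z} := by
  subst hu hv hΓ₁ hΓ₂
  simp only [← toComplex_def', ← toComplex_star, ← map_mul, ← map_pow, ← norm_eq_mul_conj,
    toComplex_inj, map_intCast, Int.cast_inj] at hruv hnu hnv hu2 hv2 hmuv
  rw [closure_one_I_eq_gaussianLattice, ← toComplex_def', ← toComplex_def']
  exact pointColorGroup_p2_general _ _ (by rwa [hruv, hnu, hnv]) (by rwa [hruv, hu2, hv2, hmuv])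
    (by rwa [hruv, hu2, hv2, hmuv])
end

section
/- Let ξ = e^{2πi/3}, Γ₁ = ℤ[ξ] the hexagonal lattice, and Γ₂ = ⟨u, v⟩_ℤ for ℝ-linearly independent u, v ∈ ℤ[ξ]. If Im_h(u·conj(v)) divides each of N(u), N(v), Re_h(u·conj(v)), Re_h(u²), Im_h(u²), Re_h(v²), Im_h(v²), Re_h(uv), and Im_h(uv), then the point group of the color group H of the coloring of Γ₁ determined by Γ₂ is the full point group of ℤ[ξ], namely the dihedral group of order 12 generated by the 60°-rotation z ↦ e^{iπ/3}z and complex conjugation (so the color group is of type p6m and the coloring is perfect). -/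
open Complex

/-!
The identity `im (u v̄) w = im (w v̄) u - im (w ū) v` (Cramer's rule in `ℂ`) shows that `w` lies in
`⟨u, v⟩_ℤ` as soon as `im (w v̄)` and `im (w ū)` are integral multiples of `im (u v̄) ≠ 0`. Since
`im (a + b ξ) = b im ξ`, taking `w = ζ u, ζ v, ū, v̄` turns the divisibility hypotheses into the
invariance of `Γ₂` under the rotation `ζ` and under conjugation. The lattice `ℤ[ξ]` is itself the
case `u = 1`, `v = ξ`, `p₂ = -1`. Conversely, a linear isometry `g` preserving `ℤ[ξ]` sends `1` to
a point of `ℤ[ξ]` of norm `1`, that is, to a power of `ζ`, and `g` is determined by `g 1` up to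
conjugation.
-/

open AddSubgroup (mem_closure_pair mem_zmultiples_iff zmultiples)
open ComplexConjugate

section Lattice

lemma im_mul_conj_smul_eq_sub (u v w : ℂ) :
    (u * conj v).im • w = (w * conj v).im • u - (w * conj u).im • v := by
  apply Complex.ext <;> simp <;> ring

variable {u v w : ℂ}

lemma mem_closure_pair_of_im_mem_zmultiples (hd : (u * conj v).im ≠ 0)
    (hv : (w * conj v).im ∈ zmultiples (u * conj v).im)
    (hu : (w * conj u).im ∈ zmultiples (u * conj v).im) :
    w ∈ AddSubgroup.closure {u, v} := by
  obtain ⟨m, hm⟩ := mem_zmultiples_iff.1 hv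
  obtain ⟨n, hn⟩ := mem_zmultiples_iff.1 hu
  refine mem_closure_pair.2 ⟨m, -n, smul_right_injective ℂ hd ?_⟩
  have cramer := im_mul_conj_smul_eq_sub u v w
  rw [← hm, ← hn] at cramer
  simp only [cramer, real_smul, zsmul_eq_mul, ofReal_mul, ofReal_intCast, Int.cast_neg]
  ring

lemma map_mem_closure_pair {A : Type*} [AddGroup A] {a b : A} (f : A →+ A)
    (ha : f a ∈ AddSubgroup.closure {a, b}) (hb : f b ∈ AddSubgroup.closure {a, b}) :
    ∀ z ∈ AddSubgroup.closure {a, b}, f z ∈ AddSubgroup.closure {a, b} := by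
  have h : AddSubgroup.closure {a, b} ≤ (AddSubgroup.closure {a, b}).comap f := by
    rw [AddSubgroup.closure_le, Set.pair_subset_iff]
    exact ⟨ha, hb⟩
  exact h

lemma mul_mem_closure_pair {c : ℂ} (hd : (u * conj v).im ≠ 0)
    (huv : (c * (u * conj v)).im ∈ zmultiples (u * conj v).im)
    (huu : (c * (u * conj u)).im ∈ zmultiples (u * conj v).im)
    (hvv : (c * (v * conj v)).im ∈ zmultiples (u * conj v).im)
    (hvu : (c * (v * conj u)).im ∈ zmultiples (u * conj v).im) :
    ∀ z ∈ AddSubgroup.closure {u, v}, c * z ∈ AddSubgroup.closure {u, v} := by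
  simp only [← mul_assoc c] at huv huu hvv hvu
  exact map_mem_closure_pair (AddMonoidHom.mulLeft c)
    (mem_closure_pair_of_im_mem_zmultiples hd huv huu)
    (mem_closure_pair_of_im_mem_zmultiples hd hvv hvu)

lemma conj_mem_closure_pair (hd : (u * conj v).im ≠ 0)
    (hu : (u ^ 2).im ∈ zmultiples (u * conj v).im)
    (hv : (v ^ 2).im ∈ zmultiples (u * conj v).im)
    (huv : (u * v).im ∈ zmultiples (u * conj v).im) :
    ∀ z ∈ AddSubgroup.closure {u, v}, conj z ∈ AddSubgroup.closure {u, v} := by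
  have im_conj_mul_conj_mem (x y : ℂ) (h : (x * y).im ∈ zmultiples (u * conj v).im) :
      (conj x * conj y).im ∈ zmultiples (u * conj v).im := by
    rw [← map_mul, conj_im]
    exact neg_mem h
  rw [sq] at hu hv
  exact map_mem_closure_pair (starRingEnd ℂ).toAddMonoidHom
    (mem_closure_pair_of_im_mem_zmultiples hd
      (im_conj_mul_conj_mem u v huv) (im_conj_mul_conj_mem u u hu))
    (mem_closure_pair_of_im_mem_zmultiples hd
      (im_conj_mul_conj_mem v v hv) (im_conj_mul_conj_mem v u (mul_comm u v ▸ huv)))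

lemma intCast_mul_mem_zmultiples {R : Type*} [Ring R] {d n : ℤ} (h : d ∣ n) (y : R) :
    n * y ∈ zmultiples (d * y) := by
  obtain ⟨k, rfl⟩ := h
  exact mem_zmultiples_iff.2 ⟨k, by rw [zsmul_eq_mul, mul_comm d k, Int.cast_mul, mul_assoc]⟩

end Lattice

section SixthRoot

lemma isPrimitiveRoot_exp_pi_mul_I_div_three :
    IsPrimitiveRoot (exp (Real.pi * I / 3)) 6 := by
  convert isPrimitiveRoot_exp 6 (by norm_num) using 2
  push_cast
  ring

lemma exp_two_pi_mul_I_div_three :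
    exp (2 * Real.pi * I / 3) = exp (Real.pi * I / 3) ^ 2 := by
  rw [← exp_nat_mul]
  congr 1
  push_cast
  ring

lemma sq_eq_sub_one_of_isPrimitiveRoot_six {R : Type*} [CommRing R] [IsDomain R] {ζ : R}
    (hζ : IsPrimitiveRoot ζ 6) : ζ ^ 2 = ζ - 1 := by
  have h : ζ ^ 2 - ζ + 1 = 0 := by
    simpa [Polynomial.cyclotomic_six] using hζ.isRoot_cyclotomic (by norm_num)
  linear_combination h

variable {ζ : ℂ}

lemma im_ne_zero_of_isPrimitiveRoot_six (hζ : IsPrimitiveRoot ζ 6) : ζ.im ≠ 0 := by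
  intro him
  have hre := congrArg re (sq_eq_sub_one_of_isPrimitiveRoot_six hζ)
  simp only [sq, mul_re, him, sub_re, one_re] at hre
  nlinarith [sq_nonneg (2 * ζ.re - 1)]

lemma conj_eq_one_sub_of_isPrimitiveRoot_six (hζ : IsPrimitiveRoot ζ 6) : conj ζ = 1 - ζ := by
  rw [← inv_eq_conj (hζ.norm'_eq_one (by norm_num))]
  refine inv_eq_of_mul_eq_one_right ?_
  linear_combination -sq_eq_sub_one_of_isPrimitiveRoot_six hζ

lemma im_intCast_add_intCast_mul_sq (hζ : IsPrimitiveRoot ζ 6) (a b : ℤ) :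
    ((a : ℂ) + b * ζ ^ 2).im = b * ζ.im := by
  simp [sq_eq_sub_one_of_isPrimitiveRoot_six hζ]

lemma normSq_intCast_add_intCast_mul_sq (hζ : IsPrimitiveRoot ζ 6) (a b : ℤ) :
    normSq (a + b * ζ ^ 2) = (a ^ 2 - a * b + b ^ 2 : ℤ) := by
  apply ofReal_injective
  rw [← mul_conj]
  simp only [map_add, map_mul, map_pow, map_intCast, conj_eq_one_sub_of_isPrimitiveRoot_six hζ]
  push_cast
  linear_combination
    (b * (2 * a - b) + b ^ 2 * (ζ ^ 2 - ζ)) * sq_eq_sub_one_of_isPrimitiveRoot_six hζ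

lemma eq_of_sq_sub_mul_add_sq_eq_one {a b : ℤ} (h : a ^ 2 - a * b + b ^ 2 = 1) :
    (a = 1 ∧ b = 0) ∨ (a = 1 ∧ b = 1) ∨ (a = 0 ∧ b = 1) ∨ (a = -1 ∧ b = 0) ∨
      (a = -1 ∧ b = -1) ∨ (a = 0 ∧ b = -1) := by
  have ha_le : a ≤ 1 := by nlinarith [sq_nonneg (a - 2 * b)]
  have ha_ge : -1 ≤ a := by nlinarith [sq_nonneg (a - 2 * b)]
  have hb_le : b ≤ 1 := by nlinarith [sq_nonneg (b - 2 * a)]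
  have hb_ge : -1 ≤ b := by nlinarith [sq_nonneg (b - 2 * a)]
  interval_cases a <;> interval_cases b <;> simp_all

lemma exists_eq_pow_of_mem_closure_of_norm_eq_one (hζ : IsPrimitiveRoot ζ 6) {z : ℂ}
    (hz : z ∈ AddSubgroup.closure {1, ζ ^ 2}) (hnorm : ‖z‖ = 1) : ∃ k : Fin 6, z = ζ ^ (k : ℕ) := by
  obtain ⟨a, b, rfl⟩ := mem_closure_pair.1 hz
  simp only [zsmul_eq_mul, mul_one] at hnorm ⊢
  have hab : a ^ 2 - a * b + b ^ 2 = 1 := by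
    have h := normSq_intCast_add_intCast_mul_sq hζ a b
    rw [normSq_eq_norm_sq, hnorm, one_pow] at h
    exact_mod_cast h.symm
  have hsq := sq_eq_sub_one_of_isPrimitiveRoot_six hζ
  have hcube : ζ ^ 3 = -1 := by linear_combination (ζ + 1) * hsq
  rcases eq_of_sq_sub_mul_add_sq_eq_one hab with ⟨rfl, rfl⟩ | ⟨rfl, rfl⟩ | ⟨rfl, rfl⟩ |
    ⟨rfl, rfl⟩ | ⟨rfl, rfl⟩ | ⟨rfl, rfl⟩ <;> push_cast
  · exact ⟨0, by simp⟩
  · exact ⟨1, by simp [hsq]⟩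
  · exact ⟨2, by simp⟩
  · exact ⟨3, by simp [hcube]⟩
  · exact ⟨4, by simp only [Fin.coe_ofNat_eq_mod]; linear_combination -hsq - ζ * hcube⟩
  · exact ⟨5, by simp only [Fin.coe_ofNat_eq_mod]; linear_combination -ζ ^ 2 * hcube⟩

lemma mul_mem_closure_pair_of_dvd (hζ : IsPrimitiveRoot ζ 6) {u v : ℂ} {p₁ p₂ nu nv : ℤ}
    (hp : u * conj v = p₁ + p₂ * ζ ^ 2) (hnu : u * conj u = nu) (hnv : v * conj v = nv)
    (hp₂ : p₂ ≠ 0) (hp₁ : p₂ ∣ p₁) (hnu_dvd : p₂ ∣ nu) (hnv_dvd : p₂ ∣ nv) :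
    ∀ z ∈ AddSubgroup.closure {u, v}, ζ * z ∈ AddSubgroup.closure {u, v} := by
  have him : (u * conj v).im = p₂ * ζ.im := by rw [hp, im_intCast_add_intCast_mul_sq hζ]
  have hvu : v * conj u = p₁ + p₂ * conj ζ ^ 2 := by simpa [mul_comm] using congrArg conj hp
  have hsq := sq_eq_sub_one_of_isPrimitiveRoot_six hζ
  have hmul_uv : ζ * (u * conj v) = p₁ * ζ - p₂ := by
    rw [hp]; linear_combination (p₂ * (ζ + 1)) * hsq
  have hmul_vu : ζ * (v * conj u) = p₁ * ζ + p₂ * conj ζ := by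
    rw [hvu, conj_eq_one_sub_of_isPrimitiveRoot_six hζ]
    linear_combination p₂ * (ζ - 1) * hsq
  apply mul_mem_closure_pair
  · rw [him]
    exact mul_ne_zero (mod_cast hp₂) (im_ne_zero_of_isPrimitiveRoot_six hζ)
  · rw [him, hmul_uv]
    simpa using intCast_mul_mem_zmultiples hp₁ ζ.im
  · rw [him, hnu]
    simpa [mul_comm] using intCast_mul_mem_zmultiples hnu_dvd ζ.im
  · rw [him, hnv]
    simpa [mul_comm] using intCast_mul_mem_zmultiples hnv_dvd ζ.im
  · rw [him, hmul_vu]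
    simpa [sub_mul, ← sub_eq_add_neg] using
      intCast_mul_mem_zmultiples (hp₁.sub (dvd_refl p₂)) ζ.im

lemma conj_mem_closure_pair_of_dvd (hζ : IsPrimitiveRoot ζ 6) {u v : ℂ}
    {p₁ p₂ q₁ q₂ r₁ r₂ s₁ s₂ : ℤ} (hp : u * conj v = p₁ + p₂ * ζ ^ 2)
    (hq : u ^ 2 = q₁ + q₂ * ζ ^ 2) (hr : v ^ 2 = r₁ + r₂ * ζ ^ 2)
    (hs : u * v = s₁ + s₂ * ζ ^ 2) (hp₂ : p₂ ≠ 0) (hq₂ : p₂ ∣ q₂) (hr₂ : p₂ ∣ r₂)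
    (hs₂ : p₂ ∣ s₂) :
    ∀ z ∈ AddSubgroup.closure {u, v}, conj z ∈ AddSubgroup.closure {u, v} := by
  apply conj_mem_closure_pair <;>
    simp only [hp, hq, hr, hs, im_intCast_add_intCast_mul_sq hζ]
  · exact mul_ne_zero (mod_cast hp₂) (im_ne_zero_of_isPrimitiveRoot_six hζ)
  · exact intCast_mul_mem_zmultiples hq₂ _
  · exact intCast_mul_mem_zmultiples hr₂ _
  · exact intCast_mul_mem_zmultiples hs₂ _

end SixthRoot

section DihedralInvariant

variable {ζ : ℂ}

/-- Invariance of a subgroup of `ℂ` under the generators of the dihedral group of order `12`, the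
rotation `z ↦ ζ z` (for `ζ` a primitive sixth root of unity) and complex conjugation. -/
structure IsDihedralInvariant (ζ : ℂ) (Γ : AddSubgroup ℂ) : Prop where
  mul_mem : ∀ z ∈ Γ, ζ * z ∈ Γ
  conj_mem : ∀ z ∈ Γ, conj z ∈ Γ

lemma isDihedralInvariant_closure_pair (hζ : IsPrimitiveRoot ζ 6) {u v : ℂ}
    {p₁ p₂ nu nv q₁ q₂ r₁ r₂ s₁ s₂ : ℤ}
    (hp : u * conj v = p₁ + p₂ * ζ ^ 2) (hnu : u * conj u = nu) (hnv : v * conj v = nv)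
    (hq : u ^ 2 = q₁ + q₂ * ζ ^ 2) (hr : v ^ 2 = r₁ + r₂ * ζ ^ 2)
    (hs : u * v = s₁ + s₂ * ζ ^ 2)
    (hp₁ : p₂ ∣ p₁) (hnu_dvd : p₂ ∣ nu) (hnv_dvd : p₂ ∣ nv) (hq₂ : p₂ ∣ q₂) (hr₂ : p₂ ∣ r₂)
    (hs₂ : p₂ ∣ s₂) : IsDihedralInvariant ζ (AddSubgroup.closure {u, v}) := by
  rcases eq_or_ne p₂ 0 with rfl | hp₂
  · rw [zero_dvd_iff] at hnu_dvd hnv_dvd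
    obtain rfl : u = 0 := by simpa [hnu_dvd] using hnu
    obtain rfl : v = 0 := by simpa [hnv_dvd] using hnv
    constructor <;> simp [AddSubgroup.closure_singleton_zero]
  · exact ⟨mul_mem_closure_pair_of_dvd hζ hp hnu hnv hp₂ hp₁ hnu_dvd hnv_dvd,
      conj_mem_closure_pair_of_dvd hζ hp hq hr hs hp₂ hq₂ hr₂ hs₂⟩

lemma isDihedralInvariant_closure_one_sq (hζ : IsPrimitiveRoot ζ 6) :
    IsDihedralInvariant ζ (AddSubgroup.closure {1, ζ ^ 2}) := by
  have hsq := sq_eq_sub_one_of_isPrimitiveRoot_six hζ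
  have hconj := conj_eq_one_sub_of_isPrimitiveRoot_six hζ
  refine isDihedralInvariant_closure_pair hζ (p₁ := -1) (p₂ := -1) (nu := 1) (nv := 1)
    (q₁ := 1) (q₂ := 0) (r₁ := -1) (r₂ := -1) (s₁ := 0) (s₂ := 1) ?_ ?_ ?_ ?_ ?_ ?_
    (by decide) (by decide) (by decide) (by decide) (by decide) (by decide) <;>
    push_cast [map_pow, hconj]
  · linear_combination 2 * hsq
  · simp
  · linear_combination (ζ ^ 2 - ζ - 1) * hsq
  · ring
  · linear_combination (ζ ^ 2 + ζ + 1) * hsq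
  · ring

end DihedralInvariant

section PointColorGroup

variable {Γ₁ Γ₂ : AddSubgroup ℂ} {ζ : ℂ}

lemma apply_mem_iff_of_iterate_eq_id {α : Type*} {s : Set α} {f : α → α} {n : ℕ} (hn : n ≠ 0)
    (hf : f^[n] = id) (h : Set.MapsTo f s s) (x : α) : f x ∈ s ↔ x ∈ s := by
  refine ⟨fun hx => ?_, fun hx => h hx⟩
  obtain ⟨m, rfl⟩ := Nat.exists_eq_succ_of_ne_zero hn
  have hback : f^[m] (f x) = x := by rw [← Function.iterate_succ_apply, hf, id]
  exact hback ▸ h.iterate m hx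

lemma coe_mem_pointColorGroup (e : ℂ ≃ₗᵢ[ℝ] ℂ) (h₁ : ∀ z, e z ∈ Γ₁ ↔ z ∈ Γ₁)
    (h₂ : ∀ z, e z ∈ Γ₂ ↔ z ∈ Γ₂) : ⇑e ∈ pointColorGroup Γ₁ Γ₂ := by
  have hpre : (Γ₁ : Set ℂ) = e ⁻¹' Γ₁ := Set.ext fun z => (h₁ z).symm
  refine ⟨e.isometry, e.surjective, map_zero e, ?_,
    Quotient.congr e.toEquiv fun a b => ?_, fun _ _ => rfl⟩
  · rw [hpre, Set.image_preimage_eq _ e.surjective, ← hpre]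
  · simp [QuotientAddGroup.leftRel_apply, ← map_neg, ← map_add, h₂]

lemma eq_mul_or_eq_mul_conj_of_isometry {g : ℂ → ℂ} (hg : Isometry g)
    (hsurj : Function.Surjective g) (h0 : g 0 = 0) :
    (g = fun z => g 1 * z) ∨ g = fun z => g 1 * conj z := by
  let e : ℂ ≃ₗᵢ[ℝ] ℂ := IsometryEquiv.toRealLinearIsometryEquivOfMapZero
    ⟨Equiv.ofBijective g ⟨hg.injective, hsurj⟩, hg⟩ h0
  have he : g = e := rfl
  obtain ⟨c, hc | hc⟩ := linear_isometry_complex e <;> rw [he, hc]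
  · exact .inl (by ext; simp)
  · exact .inr (by ext; simp)

lemma exists_eq_pow_mul_of_mem_pointColorGroup (hζ : IsPrimitiveRoot ζ 6) {g : ℂ → ℂ}
    (hg : g ∈ pointColorGroup (AddSubgroup.closure {1, ζ ^ 2}) Γ₂) :
    ∃ k : Fin 6, (g = fun z => ζ ^ (k : ℕ) * z) ∨ g = fun z => ζ ^ (k : ℕ) * conj z := by
  obtain ⟨hiso, hsurj, h0, himage, -⟩ := hg
  have hnorm : ‖g 1‖ = 1 := by rw [hiso.norm_map_of_map_zero h0, norm_one]
  have hg1 : g 1 ∈ AddSubgroup.closure {1, ζ ^ 2} := by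
    rw [← SetLike.mem_coe, ← himage]
    exact Set.mem_image_of_mem g (AddSubgroup.subset_closure (by simp))
  obtain ⟨k, hk⟩ := exists_eq_pow_of_mem_closure_of_norm_eq_one hζ hg1 hnorm
  exact ⟨k, hk ▸ eq_mul_or_eq_mul_conj_of_isometry hiso hsurj h0⟩

lemma pow_mul_mem {S M : Type*} [Monoid M] [SetLike S M] {s : S} {c : M}
    (h : ∀ z ∈ s, c * z ∈ s) (k : ℕ) : ∀ z ∈ s, c ^ k * z ∈ s := by
  intro z hz
  have hiter := Set.MapsTo.iterate (f := (c * ·)) (s := s) h k hz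
  rwa [mul_left_iterate] at hiter

lemma mul_mem_pointColorGroup {c : ℂ} (hc : IsOfFinOrder c) (h₁ : ∀ z ∈ Γ₁, c * z ∈ Γ₁)
    (h₂ : ∀ z ∈ Γ₂, c * z ∈ Γ₂) : (fun z => c * z) ∈ pointColorGroup Γ₁ Γ₂ := by
  let a : Circle := ⟨c, mem_sphere_zero_iff_norm.2 hc.norm_eq_one⟩
  obtain ⟨n, hn, hpow⟩ := isOfFinOrder_iff_pow_eq_one.1 hc
  have hperiod : (rotation a)^[n] = id := by
    change (fun z => c * z)^[n] = id
    rw [mul_left_iterate, hpow]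
    exact funext one_mul
  exact coe_mem_pointColorGroup (rotation a) (apply_mem_iff_of_iterate_eq_id hn.ne' hperiod h₁)
    (apply_mem_iff_of_iterate_eq_id hn.ne' hperiod h₂)

lemma mul_conj_mem_pointColorGroup {c : ℂ} (hc : ‖c‖ = 1) (h₁ : ∀ z ∈ Γ₁, c * conj z ∈ Γ₁)
    (h₂ : ∀ z ∈ Γ₂, c * conj z ∈ Γ₂) : (fun z => c * conj z) ∈ pointColorGroup Γ₁ Γ₂ := by
  let a : Circle := ⟨c, mem_sphere_zero_iff_norm.2 hc⟩
  have hperiod : (conjLIE.trans (rotation a))^[2] = id := by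
    funext z
    change c * conj (c * conj z) = z
    rw [map_mul, conj_conj, ← mul_assoc, mul_conj', hc]
    simp
  exact coe_mem_pointColorGroup (conjLIE.trans (rotation a))
    (apply_mem_iff_of_iterate_eq_id two_ne_zero hperiod h₁)
    (apply_mem_iff_of_iterate_eq_id two_ne_zero hperiod h₂)

theorem pointColorGroup_eq_of_isDihedralInvariant (hζ : IsPrimitiveRoot ζ 6)
    (h₂ : IsDihedralInvariant ζ Γ₂) :
    pointColorGroup (AddSubgroup.closure {1, ζ ^ 2}) Γ₂ =
      {g | ∃ k : Fin 6, g = (fun z => ζ ^ (k : ℕ) * z) ∨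
        g = (fun z => ζ ^ (k : ℕ) * conj z)} := by
  have h₁ := isDihedralInvariant_closure_one_sq hζ
  refine Set.Subset.antisymm (fun g => exists_eq_pow_mul_of_mem_pointColorGroup hζ) ?_
  rintro _ ⟨k, rfl | rfl⟩
  · exact mul_mem_pointColorGroup ((hζ.isOfFinOrder (by norm_num)).pow)
      (pow_mul_mem h₁.mul_mem k) (pow_mul_mem h₂.mul_mem k)
  · exact mul_conj_mem_pointColorGroup
      (by rw [norm_pow, hζ.norm'_eq_one (by norm_num), one_pow])
      (fun z hz => pow_mul_mem h₁.mul_mem k _ (h₁.conj_mem z hz))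
      (fun z hz => pow_mul_mem h₂.mul_mem k _ (h₂.conj_mem z hz))

end PointColorGroup

theorem pointColorGroup_p6m_general {ζ u v : ℂ} (hζ : IsPrimitiveRoot ζ 6)
    {p₁ p₂ nu nv q₁ q₂ r₁ r₂ s₁ s₂ : ℤ}
    (hp : u * conj v = p₁ + p₂ * ζ ^ 2) (hnu : u * conj u = nu) (hnv : v * conj v = nv)
    (hq : u ^ 2 = q₁ + q₂ * ζ ^ 2) (hr : v ^ 2 = r₁ + r₂ * ζ ^ 2)
    (hs : u * v = s₁ + s₂ * ζ ^ 2)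
    (hdvd : p₂ ∣ p₁ ∧ p₂ ∣ nu ∧ p₂ ∣ nv ∧ p₂ ∣ q₂ ∧ p₂ ∣ r₂ ∧ p₂ ∣ s₂) :
    pointColorGroup (AddSubgroup.closure {1, ζ ^ 2}) (AddSubgroup.closure {u, v}) =
      {g | ∃ k : Fin 6, g = (fun z => ζ ^ (k : ℕ) * z) ∨
        g = (fun z => ζ ^ (k : ℕ) * conj z)} := by
  obtain ⟨hp₁, hnu_dvd, hnv_dvd, hq₂, hr₂, hs₂⟩ := hdvd
  exact pointColorGroup_eq_of_isDihedralInvariant hζ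
    (isDihedralInvariant_closure_pair hζ hp hnu hnv hq hr hs hp₁ hnu_dvd hnv_dvd hq₂ hr₂ hs₂)

/-- Case (a) for the hexagonal lattice `Γ₁ = ℤ[ξ]`, `ξ = e^{2πi/3}`: if
`Im_h(u·conj v)` divides all of `N(u)`, `N(v)`, `Re_h(u·conj v)`, `Re_h(u²)`,
`Im_h(u²)`, `Re_h(v²)`, `Im_h(v²)`, `Re_h(uv)`, `Im_h(uv)`, then the point group of the
color group of the coloring of `Γ₁` determined by `Γ₂ = ⟨u, v⟩_ℤ` is the full dihedral
point group of order `12` generated by the `60°`-rotation `z ↦ e^{iπ/3} z` and complex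
conjugation (type `p6m`; the coloring is perfect). -/
theorem pointColorGroup_p6m (ξ ζ : ℂ)
    (hξ : ξ = Complex.exp (2 * (Real.pi : ℂ) * I / 3))
    (hζ : ζ = Complex.exp ((Real.pi : ℂ) * I / 3))
    (u v : ℂ) (a₁ a₂ b₁ b₂ : ℤ)
    (hu : u = a₁ + a₂ * ξ) (hv : v = b₁ + b₂ * ξ)
    (hind : LinearIndependent ℝ ![u, v])
    (Γ₁ Γ₂ : AddSubgroup ℂ)
    (hΓ₁ : Γ₁ = AddSubgroup.closure ({1, ξ} : Set ℂ))
    (hΓ₂ : Γ₂ = AddSubgroup.closure ({u, v} : Set ℂ))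
    (p₁ p₂ nu nv q₁ q₂ r₁ r₂ s₁ s₂ : ℤ)
    (hp : u * starRingEnd ℂ v = p₁ + p₂ * ξ)
    (hnu : u * starRingEnd ℂ u = (nu : ℂ))
    (hnv : v * starRingEnd ℂ v = (nv : ℂ))
    (hq : u ^ 2 = q₁ + q₂ * ξ)
    (hr : v ^ 2 = r₁ + r₂ * ξ)
    (hs : u * v = s₁ + s₂ * ξ)
    (hdvd : p₂ ∣ nu ∧ p₂ ∣ nv ∧ p₂ ∣ p₁ ∧ p₂ ∣ q₁ ∧ p₂ ∣ q₂ ∧ p₂ ∣ r₁ ∧ p₂ ∣ r₂ ∧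
      p₂ ∣ s₁ ∧ p₂ ∣ s₂) :
    pointColorGroup Γ₁ Γ₂ =
      {g | ∃ k : Fin 6, g = (fun z => ζ ^ (k : ℕ) * z) ∨
        g = (fun z => ζ ^ (k : ℕ) * starRingEnd ℂ z)} := by
  subst hΓ₁ hΓ₂
  obtain rfl : ξ = ζ ^ 2 := by rw [hξ, hζ, exp_two_pi_mul_I_div_three]
  obtain ⟨hnu_dvd, hnv_dvd, hp₁, -, hq₂, -, hr₂, -, hs₂⟩ := hdvd
  exact pointColorGroup_p6m_general (hζ ▸ isPrimitiveRoot_exp_pi_mul_I_div_three)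
    hp hnu hnv hq hr hs ⟨hp₁, hnu_dvd, hnv_dvd, hq₂, hr₂, hs₂⟩
end
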